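/- arXiv:1103.3693 — 3 statements merged into one kernel-verified Lean document; each statement's English description precedes it below -/
import Mathlib

section
/- A generalised multi-clause-set F with n(F) > 0 is matching lean if and only if surp(F) ≥ 1. -/
set_option linter.unusedSectionVars false
set_option linter.unusedVariables false

open scoped Classical

namespace GCLS

variable {V α : Type} [DecidableEq V] [DecidableEq α]

/-- A finite "functional" set of (variable, value) pairs, with values inside the
given domains `D`; used both for clauses and for partial assignments. -/
def FinFn (D : V → Finset α) : Type :=
  { s : Finset (V × α) // (∀ p ∈ s, p.2 ∈ D p.1) ∧
      ∀ p ∈ s, ∀ q ∈ s, p.1 = q.1 → p = q }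

variable {D : V → Finset α}

instance : DecidableEq (FinFn D) :=
  fun a b => decidable_of_iff (a.1 = b.1) Subtype.ext_iff.symm

namespace FinFn

/-- The set of variables occurring. -/
def vars (s : FinFn D) : Finset V := s.1.image Prod.fst

/-- Restriction to the pairs whose variable lies in `W`. -/
def restrictVars (s : FinFn D) (W : Finset V) : FinFn D :=
  ⟨s.1.filter (fun p => p.1 ∈ W),
   fun p hp => s.2.1 p (Finset.mem_filter.mp hp).1,
   fun p hp q hq h =>
     s.2.2 p (Finset.mem_filter.mp hp).1 q (Finset.mem_filter.mp hq).1 h⟩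

/-- Removal of a set of pairs. -/
def sdiff (s : FinFn D) (t : Finset (V × α)) : FinFn D :=
  ⟨s.1 \ t,
   fun p hp => s.2.1 p (Finset.mem_sdiff.mp hp).1,
   fun p hp q hq h =>
     s.2.2 p (Finset.mem_sdiff.mp hp).1 q (Finset.mem_sdiff.mp hq).1 h⟩

end FinFn

/-- Clauses: finite sets of literals `(v,ε)` (meaning "v ≠ ε"), at most one literal
per variable, values inside the domains. -/
abbrev Clause (D : V → Finset α) := FinFn D

/-- Partial assignments: finitely many variables get values inside their domains. -/
abbrev PAssign (D : V → Finset α) := FinFn D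

/-- `φ` satisfies the literal `(v,ε)` (i.e. "v ≠ ε"): `v` is assigned a value ≠ `ε`. -/
def SatLit (φ : PAssign D) (l : V × α) : Prop :=
  ∃ ε, (l.1, ε) ∈ φ.1 ∧ ε ≠ l.2

/-- `φ` satisfies a clause iff it satisfies some literal of it. -/
def SatClause (φ : PAssign D) (C : Clause D) : Prop :=
  ∃ l ∈ C.1, SatLit φ l

/-- The clause obtained from `C` by deleting all literals falsified by `φ`. -/
def Clause.restrict (φ : PAssign D) (C : Clause D) : Clause D :=
  FinFn.sdiff C φ.1

/-- The operation `φ * F` on multi-clause-sets: remove all clauses satisfied by `φ`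
and delete all falsified literals from the remaining clauses. -/
noncomputable def applyM (φ : PAssign D) (F : Multiset (Clause D)) : Multiset (Clause D) :=
  (F.filter (fun C => ¬ SatClause φ C)).map (Clause.restrict φ)

/-- The operation `φ * F` on clause-sets (with contraction of equal clauses). -/
noncomputable def applyF (φ : PAssign D) (F : Finset (Clause D)) : Finset (Clause D) :=
  (F.filter (fun C => ¬ SatClause φ C)).image (Clause.restrict φ)

/-- Satisfiability: some partial assignment satisfies all clauses. -/
def Sat (F : Multiset (Clause D)) : Prop :=
  ∃ φ : PAssign D, applyM φ F = 0

/-- Minimal unsatisfiability of a clause-set. -/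
def MinUnsat (F : Finset (Clause D)) : Prop :=
  ¬ Sat F.val ∧ ∀ F' ⊂ F, Sat F'.val

/-- The variables of a multi-clause-set. -/
def mvars (F : Multiset (Clause D)) : Finset V := F.toFinset.sup FinFn.vars

/-- The deficiency `δ(F) = c(F) - Σ_{v ∈ var(F)} (|D_v| - 1)`. -/
def delta (F : Multiset (Clause D)) : ℤ :=
  (Multiset.card F : ℤ) - ∑ v ∈ mvars F, ((D v).card - 1 : ℤ)

lemma powerset_toFinset_nonempty (F : Multiset (Clause D)) :
    F.powerset.toFinset.Nonempty :=
  ⟨0, by simp⟩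

/-- The maximal deficiency `δ*(F) = max {δ(F') : F' ≤ F}`. -/
noncomputable def deltaStar (F : Multiset (Clause D)) : ℤ :=
  F.powerset.toFinset.sup' (powerset_toFinset_nonempty F) delta

/-- A tight sub-multi-clause-set: `F' ≤ F` with `δ(F') = δ*(F)`. -/
noncomputable def Tight (F F' : Multiset (Clause D)) : Prop :=
  F' ≤ F ∧ delta F' = deltaStar F

/-- `F` is matching satisfiable: the clause-variable graph `B(F)` has a matching
covering all clause-nodes.  Such a matching is encoded as a multiset `P` of pairs
(clause-occurrence, variable-node), where the variable-nodes `(v,k)`,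
`k < |D v| - 1`, are the copies of the variable `v`; the matching covers each
clause-occurrence exactly once (`P.map Prod.fst = F`), uses pairwise distinct
variable-nodes, and respects adjacency in `B(F)`. -/
def MatchingSat (F : Multiset (Clause D)) : Prop :=
  ∃ P : Multiset (Clause D × (V × ℕ)),
    P.map Prod.fst = F ∧ (P.map Prod.snd).Nodup ∧
    ∀ p ∈ P, p.2.1 ∈ FinFn.vars p.1 ∧ p.2.2 < (D p.2.1).card - 1

/-- The edge between clause `C` and the copies of variable `v` is retained in
`B_φ(F)`: the literal of `C` with variable `v` is satisfied by `φ`. -/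
def EdgeSat (φ : PAssign D) (C : Clause D) (v : V) : Prop :=
  ∃ ε, (v, ε) ∈ C.1 ∧ SatLit φ (v, ε)

/-- `φ` is matching-satisfying for `F`: `B_φ(F)` has a matching covering all
clause-nodes. -/
def MatchingSatisfying (φ : PAssign D) (F : Multiset (Clause D)) : Prop :=
  ∃ P : Multiset (Clause D × (V × ℕ)),
    P.map Prod.fst = F ∧ (P.map Prod.snd).Nodup ∧
    ∀ p ∈ P, p.2.2 < (D p.2.1).card - 1 ∧ EdgeSat φ p.1 p.2.1

/-- The maximum size of a matching in `B(F)`. -/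
noncomputable def nu (F : Multiset (Clause D)) : ℕ :=
  sSup { k | ∃ P : Multiset (Clause D × (V × ℕ)),
    P.map Prod.fst ≤ F ∧ (P.map Prod.snd).Nodup ∧
    (∀ p ∈ P, p.2.1 ∈ FinFn.vars p.1 ∧ p.2.2 < (D p.2.1).card - 1) ∧
    Multiset.card P = k }

/-- The maximum size of a matching in `B_φ(F)`. -/
noncomputable def nuSub (φ : PAssign D) (F : Multiset (Clause D)) : ℕ :=
  sSup { k | ∃ P : Multiset (Clause D × (V × ℕ)),
    P.map Prod.fst ≤ F ∧ (P.map Prod.snd).Nodup ∧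
    (∀ p ∈ P, p.2.2 < (D p.2.1).card - 1 ∧ EdgeSat φ p.1 p.2.1) ∧
    Multiset.card P = k }

/-- `φ` is matching-maximum for `F`. -/
noncomputable def MatchingMaximum (φ : PAssign D) (F : Multiset (Clause D)) : Prop :=
  nuSub φ F = nu F

/-- `φ` is an autarky for `F`: every clause touched by `φ` is satisfied by `φ`. -/
def IsAutarky (φ : PAssign D) (F : Multiset (Clause D)) : Prop :=
  ∀ C ∈ F, (FinFn.vars C ∩ FinFn.vars φ).Nonempty → SatClause φ C

/-- `F` is lean: it has no non-trivial autarky. -/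
def IsLean (F : Multiset (Clause D)) : Prop :=
  ¬ ∃ φ : PAssign D, IsAutarky φ F ∧ (FinFn.vars φ ∩ mvars F).Nonempty

/-- The sub-multi-clause-set of clauses touched by the variables in `W`. -/
noncomputable def touchedBy (F : Multiset (Clause D)) (W : Finset V) : Multiset (Clause D) :=
  F.filter (fun C => (FinFn.vars C ∩ W).Nonempty)

/-- The restriction `F[W]`: keep the clauses touching `W` and delete from them all
literals whose variable is not in `W`. -/
noncomputable def restrictTo (F : Multiset (Clause D)) (W : Finset V) : Multiset (Clause D) :=
  (touchedBy F W).map (fun C => FinFn.restrictVars C W)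

/-- `φ` is a matching autarky for `F`: `φ` is matching-satisfying for the
sub-multi-clause-set of clauses touched by `φ`. -/
noncomputable def IsMatchingAutarky (φ : PAssign D) (F : Multiset (Clause D)) : Prop :=
  MatchingSatisfying φ (touchedBy F (FinFn.vars φ))

/-- `F` is matching lean: no non-trivial matching autarky. -/
noncomputable def MatchingLean (F : Multiset (Clause D)) : Prop :=
  ¬ ∃ φ : PAssign D, IsMatchingAutarky φ F ∧ (FinFn.vars φ ∩ mvars F).Nonempty

lemma surp_nonempty {F : Multiset (Clause D)} (h : (mvars F).Nonempty) :
    ((mvars F).powerset.erase ∅).Nonempty := by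
  obtain ⟨v, hv⟩ := h
  refine ⟨{v}, ?_⟩
  simp [Finset.mem_erase, Finset.singleton_subset_iff, hv]

/-- The surplus `surp(F) = min {δ(F[W]) : ∅ ≠ W ⊆ var(F)}` (and `0` if `var(F) = ∅`). -/
noncomputable def surp (F : Multiset (Clause D)) : ℤ :=
  if h : (mvars F).Nonempty then
    ((mvars F).powerset.erase ∅).inf' (surp_nonempty h)
      (fun W => delta (restrictTo F W))
  else 0

/-- The number of occurrences of the literal `l` in `F`. -/
noncomputable def litCount (F : Multiset (Clause D)) (l : V × α) : ℕ :=
  Multiset.card (F.filter (fun C => l ∈ C.1))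

/-- The number of occurrences `#_v(F)` of the variable `v` in `F`. -/
noncomputable def varCount (F : Multiset (Clause D)) (v : V) : ℕ :=
  ∑ ε ∈ D v, litCount F (v, ε)

/-- The partial assignment `⟨v → ε⟩`. -/
def single (v : V) (ε : α) (hε : ε ∈ D v) : PAssign D :=
  ⟨{(v, ε)}, by
    refine ⟨?_, ?_⟩
    · intro p hp
      rw [Finset.mem_singleton] at hp
      subst hp; exact hε
    · intro p hp q hq _
      rw [Finset.mem_singleton] at hp hq
      subst hp; subst hq; rfl⟩

/-- Composition `φ ∘ ψ` of partial assignments: domain is the union of the domains,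
`ψ` taking precedence. -/
def comp (φ ψ : PAssign D) : PAssign D :=
  ⟨ψ.1 ∪ φ.1.filter (fun p => p.1 ∉ FinFn.vars ψ), by
    constructor
    · intro p hp
      rcases Finset.mem_union.mp hp with h | h
      · exact ψ.2.1 p h
      · exact φ.2.1 p (Finset.mem_filter.mp h).1
    · intro p hp q hq hpq
      rcases Finset.mem_union.mp hp with h1 | h1 <;>
        rcases Finset.mem_union.mp hq with h2 | h2
      · exact ψ.2.2 p h1 q h2 hpq
      · exact absurd (hpq ▸ Finset.mem_image_of_mem Prod.fst h1)
          (Finset.mem_filter.mp h2).2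
      · exact absurd (hpq.symm ▸ Finset.mem_image_of_mem Prod.fst h2)
          (Finset.mem_filter.mp h1).2
      · exact φ.2.2 p (Finset.mem_filter.mp h1).1 q (Finset.mem_filter.mp h2).1 hpq⟩

/-- Two clauses clash (in some variable). -/
def Clash (C C' : Clause D) : Prop :=
  ∃ v ε ε', (v, ε) ∈ C.1 ∧ (v, ε') ∈ C'.1 ∧ ε ≠ ε'

/-- The number of variables in which two clauses clash. -/
noncomputable def clashCount (C C' : Clause D) : ℕ :=
  ((FinFn.vars C).filter
    (fun v => ∃ ε ε', (v, ε) ∈ C.1 ∧ (v, ε') ∈ C'.1 ∧ ε ≠ ε')).card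

/-- Hitting clause-sets: every two distinct clauses clash. -/
def Hitting (F : Finset (Clause D)) : Prop :=
  ∀ C ∈ F, ∀ C' ∈ F, C ≠ C' → Clash C C'

/-- Boolean clauses over the boolean variables `V × α` (one boolean variable per
generalised literal; the value `false` gives the positive boolean literal). -/
abbrev BClause (V α : Type) :=
  Clause (fun _ : V × α => (Finset.univ : Finset Bool))

/-- The direct translation of a single clause: each literal `(v,ε)` is replaced by
the positive boolean literal of the boolean variable `(v,ε)`. -/
def dirClause (C : Clause D) : BClause V α :=
  ⟨C.1.image (fun p => (p, false)), by
    constructor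
    · intro p _; exact Finset.mem_univ _
    · intro p hp q hq h
      simp only [Finset.mem_image] at hp hq
      obtain ⟨a, -, rfl⟩ := hp
      obtain ⟨b, -, rfl⟩ := hq
      exact congrArg (fun x => (x, false)) h⟩

/-- The ALO-clause for a variable `v`: the negative boolean literals of the boolean
variables `(v,ε)` for `ε ∈ D v`. -/
def aloClause (D : V → Finset α) (v : V) : BClause V α :=
  ⟨(D v).image (fun ε => ((v, ε), true)), by
    constructor
    · intro p _; exact Finset.mem_univ _
    · intro p hp q hq h
      simp only [Finset.mem_image] at hp hq
      obtain ⟨a, -, rfl⟩ := hp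
      obtain ⟨b, -, rfl⟩ := hq
      exact congrArg (fun x => (x, true)) h⟩

/-- The direct translation `Γ(F)`: the translated clauses together with the
ALO-clauses for all occurring variables. -/
noncomputable def dirTrans (F : Finset (Clause D)) : Finset (BClause V α) :=
  F.image dirClause ∪ (mvars F.val).image (aloClause D)

/-- the copies of the variables in `U` -/
def copies (D : V → Finset α) (U : Finset V) : Finset (V × ℕ) :=
  U.biUnion fun v => (Finset.range ((D v).card - 1)).image fun k => (v, k)

lemma mem_copies {U : Finset V} {p : V × ℕ} :
    p ∈ copies D U ↔ p.1 ∈ U ∧ p.2 < (D p.1).card - 1 := by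
  obtain ⟨v, k⟩ := p
  simp only [copies, Finset.mem_biUnion, Finset.mem_image, Finset.mem_range, Prod.mk.injEq]
  constructor
  · rintro ⟨a, ha, b, hb, rfl, rfl⟩
    exact ⟨ha, hb⟩
  · rintro ⟨h1, h2⟩
    exact ⟨v, h1, k, h2, rfl, rfl⟩

lemma card_copies (U : Finset V) :
    (copies D U).card = ∑ v ∈ U, ((D v).card - 1) := by
  unfold copies
  rw [Finset.card_biUnion]
  · refine Finset.sum_congr rfl fun v _ => ?_
    rw [Finset.card_image_of_injective _ (fun a b h => (Prod.mk.inj h).2), Finset.card_range]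
  · intro a _ b _ hab
    rw [Function.onFun, Finset.disjoint_left]
    intro p hp hq
    simp only [Finset.mem_image] at hp hq
    obtain ⟨_, _, rfl⟩ := hp
    obtain ⟨_, _, h⟩ := hq
    exact hab (Prod.mk.inj h).1.symm

lemma mem_vars {C : FinFn D} {v : V} : v ∈ FinFn.vars C ↔ ∃ ε, (v, ε) ∈ C.1 := by
  simp [FinFn.vars]

lemma mem_mvars {F : Multiset (Clause D)} {v : V} :
    v ∈ mvars F ↔ ∃ C ∈ F, v ∈ FinFn.vars C := by
  simp [mvars, Finset.mem_sup]

lemma vars_restrictVars (C : FinFn D) (W : Finset V) :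
    FinFn.vars (FinFn.restrictVars C W) = FinFn.vars C ∩ W := by
  ext v
  simp [FinFn.vars, FinFn.restrictVars]

lemma mvars_restrictTo (F : Multiset (Clause D)) {W : Finset V} (hW : W ⊆ mvars F) :
    mvars (restrictTo F W) = W := by
  ext v
  rw [mem_mvars]
  simp only [restrictTo, touchedBy, Multiset.mem_map, Multiset.mem_filter]
  constructor
  · rintro ⟨_, ⟨C, _, rfl⟩, h⟩
    rw [vars_restrictVars] at h
    exact (Finset.mem_inter.mp h).2
  · intro hv
    obtain ⟨C, hC, hvC⟩ := mem_mvars.mp (hW hv)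
    exact ⟨_, ⟨C, ⟨hC, v, Finset.mem_inter.mpr ⟨hvC, hv⟩⟩, rfl⟩, by
      rw [vars_restrictVars]; exact Finset.mem_inter.mpr ⟨hvC, hv⟩⟩

lemma delta_restrictTo (hD : ∀ v, (D v).Nonempty) (F : Multiset (Clause D)) {W : Finset V}
    (hW : W ⊆ mvars F) :
    delta (restrictTo F W) =
      (Multiset.card (touchedBy F W) : ℤ) - ((copies D W).card : ℤ) := by
  rw [delta, mvars_restrictTo F hW, card_copies, restrictTo, Multiset.card_map]
  congr 1
  rw [Nat.cast_sum]
  refine Finset.sum_congr rfl fun v _ => ?_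
  have := (hD v).card_pos
  omega

lemma one_le_surp_iff (hD : ∀ v, (D v).Nonempty) (F : Multiset (Clause D))
    (hn : (mvars F).Nonempty) :
    1 ≤ surp F ↔ ∀ W ⊆ mvars F, W.Nonempty →
      (copies D W).card < Multiset.card (touchedBy F W) := by
  rw [surp, dif_pos hn, Finset.le_inf'_iff]
  constructor
  · intro h W hW hne
    have := h W (by simp [hW, hne.ne_empty])
    rw [delta_restrictTo hD F hW] at this
    omega
  · intro h W hW
    simp only [Finset.mem_erase, Finset.mem_powerset] at hW
    rw [delta_restrictTo hD F hW.2]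
    have := h W hW.2 (Finset.nonempty_iff_ne_empty.mpr hW.1)
    omega

lemma card_filter_coe {β : Type} [DecidableEq β] (T : Multiset β) (p : β → Prop) [DecidablePred p] :
    Multiset.card (T.filter p) = (Finset.univ.filter fun x : T => p x.1).card := by
  conv_lhs => rw [← Multiset.map_univ_coe T]
  rw [Multiset.filter_map, Multiset.card_map]
  rfl

lemma autarky_of_injective (hD : ∀ v, (D v).Nonempty) (F : Multiset (Clause D)) (W : Finset V)
    (f : (touchedBy F W) → V × ℕ) (hf : Function.Injective f)
    (hfm : ∀ x, f x ∈ copies D (FinFn.vars x.1 ∩ W)) :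
    ∃ φ : PAssign D, IsMatchingAutarky φ F ∧ FinFn.vars φ = W := by
  have h1 : ∀ x, ∃ a, ((f x).1, a) ∈ x.1.1 := fun x =>
    mem_vars.mp (Finset.mem_inter.mp (mem_copies.mp (hfm x)).1).1
  choose val hval using h1
  have h2 : ∀ v, ∃ ε ∈ D v, ∀ x, (f x).1 = v → val x ≠ ε := by
    intro v
    have hc : ((Finset.univ.filter fun x => (f x).1 = v).image val).card < (D v).card := by
      have hle : (Finset.univ.filter fun x => (f x).1 = v).card ≤
          (Finset.range ((D v).card - 1)).card := by
        refine Finset.card_le_card_of_injOn (fun x => (f x).2) ?_ ?_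
        · intro x hx
          have hx := (Finset.mem_filter.mp hx).2
          have := (mem_copies.mp (hfm x)).2
          rw [hx] at this
          simpa using this
        · intro x hx y hy hxy
          have hx := (Finset.mem_filter.mp hx).2
          have hy := (Finset.mem_filter.mp hy).2
          exact hf (Prod.ext (hx.trans hy.symm) hxy)
      have := (hD v).card_pos
      rw [Finset.card_range] at hle
      have := Finset.card_image_le (s := Finset.univ.filter fun x => (f x).1 = v) (f := val)
      omega
    obtain ⟨ε, hε, hn⟩ := Finset.exists_mem_notMem_of_card_lt_card hc
    refine ⟨ε, hε, fun x hx he => hn ?_⟩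
    exact Finset.mem_image.mpr ⟨x, by simp [hx], he⟩
  choose g hg hgv using h2
  let φ : PAssign D := ⟨W.image fun v => (v, g v), by
    constructor
    · intro p hp
      obtain ⟨v, _, rfl⟩ := Finset.mem_image.mp hp
      exact hg v
    · intro p hp q hq h
      obtain ⟨v, _, rfl⟩ := Finset.mem_image.mp hp
      obtain ⟨w, _, rfl⟩ := Finset.mem_image.mp hq
      simp only at h
      rw [h]⟩
  have hφ : FinFn.vars φ = W := by
    ext v
    simp [FinFn.vars, φ]
  refine ⟨φ, ?_, hφ⟩
  rw [IsMatchingAutarky, hφ]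
  refine ⟨Finset.univ.val.map fun x : (touchedBy F W) => (x.1, f x), ?_, ?_, ?_⟩
  · rw [Multiset.map_map]
    exact Multiset.map_univ_coe _
  · rw [Multiset.map_map]
    exact Multiset.Nodup.map hf Finset.univ.nodup
  · intro p hp
    obtain ⟨x, _, rfl⟩ := Multiset.mem_map.mp hp
    have hx := mem_copies.mp (hfm x)
    refine ⟨hx.2, val x, hval x, g (f x).1, ?_, (hgv _ x rfl).symm⟩
    exact Finset.mem_image.mpr ⟨(f x).1, (Finset.mem_inter.mp hx.1).2, rfl⟩

lemma touchedBy_sdiff_card_add (F : Multiset (Clause D)) (W : Finset V)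
    (s : Finset (touchedBy F W)) :
    Multiset.card (touchedBy F (W \ s.biUnion fun x => FinFn.vars x.1 ∩ W)) + s.card ≤
      Multiset.card (touchedBy F W) := by
  set W' := s.biUnion fun x => FinFn.vars x.1 ∩ W with hW'
  have h1 : touchedBy F (W \ W') =
      (touchedBy F W).filter (fun C => (FinFn.vars C ∩ (W \ W')).Nonempty) := by
    rw [touchedBy, touchedBy, Multiset.filter_filter]
    refine Multiset.filter_congr fun C _ => ?_
    constructor
    · intro h
      exact ⟨h, h.mono (Finset.inter_subset_inter_left Finset.sdiff_subset)⟩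
    · exact fun h => h.1
  rw [h1, card_filter_coe, ← Finset.card_union_of_disjoint]
  · refine (Finset.card_le_univ _).trans ?_
    rw [Multiset.card_coe]
  · rw [Finset.disjoint_right]
    intro x hx hx'
    obtain ⟨v, hv⟩ := (Finset.mem_filter.mp hx').2
    simp only [Finset.mem_inter, Finset.mem_sdiff] at hv
    exact hv.2.2 (Finset.mem_biUnion.mpr ⟨x, hx, Finset.mem_inter.mpr ⟨hv.1, hv.2.1⟩⟩)

lemma exists_autarky (hD : ∀ v, (D v).Nonempty) (F : Multiset (Clause D)) (n : ℕ) :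
    ∀ W : Finset V, W.card = n → W ⊆ mvars F → W.Nonempty →
      Multiset.card (touchedBy F W) ≤ (copies D W).card →
      ∃ φ : PAssign D, IsMatchingAutarky φ F ∧ (FinFn.vars φ ∩ mvars F).Nonempty := by
  induction n using Nat.strong_induction_on with
  | _ n ih =>
  intro W hn hW hne hle
  by_cases hall : ∀ s : Finset (touchedBy F W),
      s.card ≤ (s.biUnion fun x => copies D (FinFn.vars x.1 ∩ W)).card
  · obtain ⟨f, hf, hfm⟩ := (Finset.all_card_le_biUnion_card_iff_exists_injective _).mp hall
    obtain ⟨φ, h1, h2⟩ := autarky_of_injective hD F W f hf hfm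
    refine ⟨φ, h1, ?_⟩
    rw [h2, Finset.inter_eq_left.mpr hW]
    exact hne
  · push Not at hall
    obtain ⟨s, hs⟩ := hall
    have hcard := touchedBy_sdiff_card_add F W s
    set W' := s.biUnion fun x => FinFn.vars x.1 ∩ W with hW'
    have hsub : W' ⊆ W := by
      intro v hv
      obtain ⟨x, _, hx⟩ := Finset.mem_biUnion.mp hv
      exact (Finset.mem_inter.mp hx).2
    have hc : (s.biUnion fun x => copies D (FinFn.vars x.1 ∩ W)) = copies D W' := by
      ext p
      simp only [hW', Finset.mem_biUnion, mem_copies]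
      constructor
      · rintro ⟨x, hx, h1, h2⟩
        exact ⟨⟨x, hx, h1⟩, h2⟩
      · rintro ⟨⟨x, hx, h1⟩, h2⟩
        exact ⟨x, hx, h1, h2⟩
    rw [hc] at hs
    have hsum : (copies D (W \ W')).card + (copies D W').card = (copies D W).card := by
      simp only [card_copies]
      exact Finset.sum_sdiff hsub
    have hW'ne : W'.Nonempty := by
      have : s.Nonempty := Finset.card_pos.mp (by omega)
      obtain ⟨x, hx⟩ := this
      have hx2 : x.1 ∈ touchedBy F W := Multiset.coe_mem
      obtain ⟨v, hv⟩ := (Multiset.mem_filter.mp hx2).2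
      exact ⟨v, Finset.mem_biUnion.mpr ⟨x, hx, hv⟩⟩
    have hdne : (W \ W').Nonempty := by
      rw [Finset.nonempty_iff_ne_empty]
      intro h0
      rw [h0] at hsum
      have : (copies D (∅ : Finset V)).card = 0 := by simp [card_copies]
      omega
    have hlt : (W \ W').card < n := by
      have := Finset.card_sdiff_add_card_eq_card hsub
      have := hW'ne.card_pos
      omega
    exact ih _ hlt (W \ W') rfl (Finset.sdiff_subset.trans hW) hdne (by omega)

/-- a multi-clause-set with at least one variable is matching lean
iff its surplus is at least `1`. -/
theorem matchingLean_iff_surplus_pos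
    (hD : ∀ v, (D v).Nonempty) (F : Multiset (Clause D))
    (hn : (mvars F).Nonempty) :
    MatchingLean F ↔ 1 ≤ surp F := by
  rw [one_le_surp_iff hD F hn]
  constructor
  · intro h W hW hne
    by_contra hlt
    exact h (exists_autarky hD F _ W rfl hW hne (by omega))
  · rintro h ⟨φ, ⟨P, hP1, hP2, hP3⟩, hne⟩
    have hlt := h (FinFn.vars φ ∩ mvars F) Finset.inter_subset_right hne
    have hT : touchedBy F (FinFn.vars φ ∩ mvars F) = touchedBy F (FinFn.vars φ) := by
      refine Multiset.filter_congr fun C hC => ?_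
      constructor
      · exact fun h => h.mono (Finset.inter_subset_inter_left Finset.inter_subset_left)
      · rintro ⟨v, hv⟩
        have hv := Finset.mem_inter.mp hv
        exact ⟨v, Finset.mem_inter.mpr ⟨hv.1, Finset.mem_inter.mpr
          ⟨hv.2, mem_mvars.mpr ⟨C, hC, hv.1⟩⟩⟩⟩
    rw [hT, ← hP1, Multiset.card_map, ← Multiset.card_map Prod.snd P] at hlt
    have hle : (⟨P.map Prod.snd, hP2⟩ : Finset (V × ℕ)).card ≤
        (copies D (FinFn.vars φ ∩ mvars F)).card := by
      refine Finset.card_le_card fun q hq => ?_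
      obtain ⟨p, hp, rfl⟩ := Multiset.mem_map.mp (Finset.mem_mk.mp hq)
      obtain ⟨h1, ε, h2, ε', h3, _⟩ := hP3 p hp
      have hpF : p.1 ∈ touchedBy F (FinFn.vars φ) := by
        rw [← hP1]; exact Multiset.mem_map_of_mem _ hp
      exact mem_copies.mpr ⟨Finset.mem_inter.mpr ⟨mem_vars.mpr ⟨ε', h3⟩,
        mem_mvars.mpr ⟨p.1, (Multiset.mem_filter.mp hpF).1, mem_vars.mpr ⟨ε, h2⟩⟩⟩, h1⟩
    rw [Finset.card_mk] at hle
    omega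

end GCLS
end

section
/- Let F be a generalised clause-set and v ∈ var(F) a variable such that min_{ε∈D_v}(#_v(F) − #_{(v,ε)}(F)) ≥ |D_v| and surp(F) ≥ |D_v|. Then for every ε ∈ D_v one has δ*(⟨v→ε⟩*F) ≤ δ(F) − 1, where ⟨v→ε⟩ denotes the partial assignment with domain {v} assigning value ε to v. -/
set_option linter.unusedSectionVars false
set_option linter.unusedVariables false

open scoped Classical

namespace GCLS

variable {V α : Type} [DecidableEq V] [DecidableEq α]

variable {D : V → Finset α}

lemma aux_mem_mvars (F : Multiset (Clause D)) (x : V) :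
    x ∈ mvars F ↔ ∃ C ∈ F, x ∈ FinFn.vars C := by
  simp [mvars, Finset.mem_sup]

lemma aux_mvars_restrictTo (F : Multiset (Clause D)) (W : Finset V) (hW : W ⊆ mvars F) :
    mvars (restrictTo F W) = W := by
  ext x
  rw [aux_mem_mvars]
  constructor
  · rintro ⟨C, hC, hx⟩
    simp only [restrictTo, Multiset.mem_map] at hC
    obtain ⟨C', -, rfl⟩ := hC
    simp only [FinFn.vars, FinFn.restrictVars, Finset.mem_image, Finset.mem_filter] at hx
    obtain ⟨p, ⟨-, hp⟩, rfl⟩ := hx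
    exact hp
  · intro hx
    obtain ⟨C, hC, hxC⟩ := (aux_mem_mvars F x).1 (hW hx)
    refine ⟨FinFn.restrictVars C W, ?_, ?_⟩
    · refine Multiset.mem_map_of_mem _ ?_
      simp only [touchedBy, Multiset.mem_filter]
      exact ⟨hC, x, Finset.mem_inter.2 ⟨hxC, hx⟩⟩
    · simp only [FinFn.vars, FinFn.restrictVars, Finset.mem_image, Finset.mem_filter] at hxC ⊢
      obtain ⟨p, hp, rfl⟩ := hxC
      exact ⟨p, ⟨hp, hx⟩, rfl⟩

lemma aux_surp (F : Multiset (Clause D)) (W : Finset V) (hW : W ⊆ mvars F) (hne : W.Nonempty) :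
    surp F ≤ (Multiset.card (touchedBy F W) : ℤ) - ∑ x ∈ W, ((D x).card - 1 : ℤ) := by
  have h : (mvars F).Nonempty := hne.mono hW
  have h' : delta (restrictTo F W) =
      (Multiset.card (touchedBy F W) : ℤ) - ∑ x ∈ W, ((D x).card - 1 : ℤ) := by
    rw [delta, aux_mvars_restrictTo F W hW]
    simp [restrictTo]
  rw [← h', surp, dif_pos h]
  refine Finset.inf'_le (fun W => delta (restrictTo F W)) ?_
  rw [Finset.mem_erase, Finset.mem_powerset]
  exact ⟨hne.ne_empty, hW⟩

lemma aux_count (F : Finset (Clause D)) (v : V) (ε : α) (hε : ε ∈ D v) :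
    varCount F.val v - litCount F.val (v, ε) ≤
      (F.filter (fun C => ∃ e, e ≠ ε ∧ (v, e) ∈ C.1)).card := by
  have h0 : varCount F.val v =
      litCount F.val (v, ε) + ∑ e ∈ (D v).erase ε, litCount F.val (v, e) := by
    rw [varCount, Finset.add_sum_erase (D v) (fun e => litCount F.val (v, e)) hε]
  have h3 : ∑ e ∈ (D v).erase ε, litCount F.val (v, e) =
      ∑ e ∈ (D v).erase ε, (F.filter (fun C => (v, e) ∈ C.1)).card := by
    refine Finset.sum_congr rfl fun e _ => ?_
    rw [litCount, Finset.card, Finset.filter_val]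
  rw [h0, Nat.add_sub_cancel_left, h3, ← Finset.card_biUnion]
  · refine Finset.card_le_card ?_
    intro C hC
    simp only [Finset.mem_biUnion, Finset.mem_filter, Finset.mem_erase] at hC ⊢
    obtain ⟨e, ⟨he, -⟩, hCF, hC⟩ := hC
    exact ⟨hCF, e, he, hC⟩
  · intro a _ b _ hab
    refine Finset.disjoint_left.2 ?_
    intro C hC hC'
    simp only [Finset.mem_filter] at hC hC'
    have := C.2.2 _ hC.2 _ hC'.2 rfl
    exact hab (congrArg Prod.snd this)

/-- if `v ∈ var(F)` with
`min_{ε ∈ D_v}(#_v(F) − #_{(v,ε)}(F)) ≥ |D_v|` and `surp(F) ≥ |D_v|`, then for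
every `ε ∈ D_v` one has `δ*(⟨v→ε⟩ * F) ≤ δ(F) − 1`. -/
theorem deltaStar_decreases
    (hD : ∀ v, (D v).Nonempty) (F : Finset (Clause D))
    (v : V) (hv : v ∈ mvars F.val)
    (h1 : ∀ ε ∈ D v, (D v).card ≤ varCount F.val v - litCount F.val (v, ε))
    (h2 : ((D v).card : ℤ) ≤ surp F.val)
    (ε : α) (hε : ε ∈ D v) :
    deltaStar (applyF (single v ε hε) F).val ≤ delta F.val - 1 := by
  rw [deltaStar, Finset.sup'_le_iff]
  intro G hG
  rw [Multiset.mem_toFinset, Multiset.mem_powerset] at hG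
  have hnd : G.Nodup := Multiset.nodup_of_le hG (Finset.nodup _)
  have hrep : ∀ C' ∈ G, ∃ C ∈ F, ¬ SatClause (single v ε hε) C ∧
      Clause.restrict (single v ε hε) C = C' := by
    intro C' hC'
    have := Multiset.mem_of_le hG hC'
    rw [Finset.mem_val, applyF, Finset.mem_image] at this
    obtain ⟨C, hC, rfl⟩ := this
    rw [Finset.mem_filter] at hC
    exact ⟨C, hC.1, hC.2, rfl⟩
  have hunsat : ∀ C : Clause D, ¬ SatClause (single v ε hε) C → ∀ e, (v, e) ∈ C.1 → e = ε := by
    intro C hC e he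
    by_contra hne
    exact hC ⟨(v, e), he, ε, by simp [single], fun h => hne h.symm⟩
  have hvG : v ∉ mvars G := by
    intro hv'
    obtain ⟨C', hC', hx⟩ := (aux_mem_mvars G v).1 hv'
    obtain ⟨C, -, hs, rfl⟩ := hrep C' hC'
    simp only [FinFn.vars, Clause.restrict, FinFn.sdiff, single, Finset.mem_image,
      Finset.mem_sdiff, Finset.mem_singleton] at hx
    obtain ⟨⟨x, e⟩, ⟨hp, hne⟩, hx⟩ := hx
    simp only at hx
    subst hx
    exact hne (by rw [hunsat C hs e hp])
  have hsub : mvars G ⊆ mvars F.val := by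
    intro x hx
    obtain ⟨C', hC', hx⟩ := (aux_mem_mvars G x).1 hx
    obtain ⟨C, hCF, hs, rfl⟩ := hrep C' hC'
    refine (aux_mem_mvars _ x).2 ⟨C, hCF, ?_⟩
    simp only [FinFn.vars, Clause.restrict, FinFn.sdiff, Finset.mem_image,
      Finset.mem_sdiff] at hx ⊢
    obtain ⟨p, ⟨hp, -⟩, hx⟩ := hx
    exact ⟨p, hp, hx⟩
  have hkey : ∀ B : Finset (Clause D), B ⊆ F →
      (∀ C ∈ B, ¬ SatClause (single v ε hε) C →
        Clause.restrict (single v ε hε) C ∈ G → False) →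
      Multiset.card G + B.card ≤ F.card := by
    intro B hB hdis
    have h3 : G.toFinset ⊆ (F \ B).image (Clause.restrict (single v ε hε)) := by
      intro C' hC'
      rw [Multiset.mem_toFinset] at hC'
      obtain ⟨C, hCF, hs, rfl⟩ := hrep C' hC'
      refine Finset.mem_image_of_mem _ (Finset.mem_sdiff.2 ⟨hCF, fun hCB => ?_⟩)
      exact hdis C hCB hs hC'
    have h4 := (Finset.card_le_card h3).trans Finset.card_image_le
    rw [Multiset.toFinset_card_of_nodup hnd] at h4
    have h5 := Finset.card_sdiff_add_card_eq_card hB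
    omega
  have hsum : ∑ x ∈ mvars F.val, ((D x).card - 1 : ℤ) =
      ∑ x ∈ mvars G, ((D x).card - 1 : ℤ) + (((D v).card - 1 : ℤ) +
        ∑ x ∈ (mvars F.val \ mvars G).erase v, ((D x).card - 1 : ℤ)) := by
    rw [Finset.add_sum_erase _ (fun x => ((D x).card - 1 : ℤ)) (Finset.mem_sdiff.2 ⟨hv, hvG⟩),
      add_comm, Finset.sum_sdiff hsub]
  have hcF : (Multiset.card F.val : ℤ) = F.card := rfl
  rw [delta, delta, hsum, hcF]
  rcases Finset.eq_empty_or_nonempty ((mvars F.val \ mvars G).erase v) with hW | hW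
  · rw [hW, Finset.sum_empty]
    have h3 := (h1 ε hε).trans (aux_count F v ε hε)
    have h4 := hkey (F.filter (fun C => ∃ e, e ≠ ε ∧ (v, e) ∈ C.1)) (Finset.filter_subset _ _) (by
      intro C hC hs _
      obtain ⟨-, e, he, hC⟩ := Finset.mem_filter.1 hC
      exact he (hunsat C hs e hC))
    omega
  · have h3 := h2.trans (aux_surp F.val _
      ((Finset.erase_subset _ _).trans Finset.sdiff_subset) hW)
    have h4 := hkey (F.filter (fun C =>
        (FinFn.vars C ∩ ((mvars F.val \ mvars G).erase v)).Nonempty))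
        (Finset.filter_subset _ _) (by
      intro C hC hs hCG
      obtain ⟨-, x, hx⟩ := Finset.mem_filter.1 hC
      rw [Finset.mem_inter, Finset.mem_erase, Finset.mem_sdiff] at hx
      obtain ⟨hxC, hxv, -, hxG⟩ := hx
      refine hxG ((aux_mem_mvars G x).2 ⟨_, hCG, ?_⟩)
      simp only [FinFn.vars, Clause.restrict, FinFn.sdiff, single, Finset.mem_image,
        Finset.mem_sdiff, Finset.mem_singleton] at hxC ⊢
      obtain ⟨p, hp, rfl⟩ := hxC
      exact ⟨p, ⟨hp, fun h => hxv (by rw [h])⟩, rfl⟩)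
    have h5 : Multiset.card (touchedBy F.val ((mvars F.val \ mvars G).erase v)) =
        (F.filter (fun C =>
          (FinFn.vars C ∩ ((mvars F.val \ mvars G).erase v)).Nonempty)).card := by
      rw [touchedBy, Finset.card, Finset.filter_val]
    have h6 : Multiset.card G +
        Multiset.card (touchedBy F.val ((mvars F.val \ mvars G).erase v)) ≤ F.card := by
      rw [h5]
      exact h4
    omega

end GCLS
end

section
/- For every minimally unsatisfiable generalised clause-set F with δ(F) = 1 and n(F) > 0 there exists a variable v ∈ var(F) such that #_{(v,ε)}(F) = 1 for every ε ∈ D_v, i.e., every value of v occurs in exactly one clause of F. -/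
set_option linter.unusedSectionVars false
set_option linter.unusedVariables false

open scoped Classical

namespace GCLS

variable {V α : Type} [DecidableEq V] [DecidableEq α]

variable {D : V → Finset α}

lemma mem_vars_iff (C : Clause D) (v : V) : v ∈ FinFn.vars C ↔ ∃ ε, (v, ε) ∈ C.1 := by
  unfold FinFn.vars
  simp

lemma mem_mvars_iff (F : Finset (Clause D)) (v : V) :
    v ∈ mvars F.val ↔ ∃ C ∈ F, v ∈ FinFn.vars C := by
  unfold mvars
  rw [Finset.mem_sup]
  simp

lemma sat_iff (hD : ∀ v, (D v).Nonempty) (F : Finset (Clause D)) :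
    Sat F.val ↔ ∃ f : V → α, (∀ v, f v ∈ D v) ∧ ∀ C ∈ F, ∃ p ∈ C.1, f p.1 ≠ p.2 := by
  have key : ∀ φ : PAssign D, applyM φ F.val = 0 ↔ ∀ C ∈ F, SatClause φ C := by
    intro φ
    unfold applyM
    rw [Multiset.map_eq_zero, Multiset.filter_eq_nil]
    simp
  constructor
  · rintro ⟨φ, hφ⟩
    rw [key] at hφ
    have : ∀ v, ∃ ε ∈ D v, ∀ δ, (v, δ) ∈ φ.1 → δ = ε := by
      intro v
      by_cases h : ∃ ε, (v, ε) ∈ φ.1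
      · obtain ⟨ε, hε⟩ := h
        refine ⟨ε, φ.2.1 _ hε, fun δ hδ => ?_⟩
        have := φ.2.2 _ hδ _ hε rfl
        exact congrArg Prod.snd this
      · obtain ⟨ε, hε⟩ := hD v
        exact ⟨ε, hε, fun δ hδ => absurd ⟨δ, hδ⟩ h⟩
    choose f hf hf2 using this
    refine ⟨f, hf, fun C hC => ?_⟩
    obtain ⟨l, hl, ε, hε, hne⟩ := hφ C hC
    refine ⟨l, hl, ?_⟩
    rw [← hf2 _ _ hε]
    exact hne
  · rintro ⟨f, hf, h⟩
    refine ⟨⟨(mvars F.val).image (fun v => (v, f v)), ?_, ?_⟩, ?_⟩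
    · intro p hp
      obtain ⟨v, -, rfl⟩ := Finset.mem_image.mp hp
      exact hf v
    · intro p hp q hq hpq
      obtain ⟨v, -, rfl⟩ := Finset.mem_image.mp hp
      obtain ⟨w, -, rfl⟩ := Finset.mem_image.mp hq
      simp only at hpq
      rw [hpq]
    · refine (key _).mpr ?_
      intro C hC
      obtain ⟨p, hp, hne⟩ := h C hC
      refine ⟨p, hp, f p.1, ?_, hne⟩
      refine Finset.mem_image.mpr ⟨p.1, ?_, rfl⟩
      rw [mem_mvars_iff]
      exact ⟨C, hC, (mem_vars_iff _ _).mpr ⟨p.2, hp⟩⟩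

/-- clauses touched by `W` -/
noncomputable def tch (F : Finset (Clause D)) (W : Finset V) : Finset (Clause D) :=
  F.filter (fun C => ∃ v ∈ W, v ∈ FinFn.vars C)

lemma mem_tch (F : Finset (Clause D)) (W : Finset V) (C : Clause D) :
    C ∈ tch F W ↔ C ∈ F ∧ ∃ v ∈ W, v ∈ FinFn.vars C := by
  unfold tch
  simp

lemma no_autarky (hD : ∀ v, (D v).Nonempty) (F : Finset (Clause D)) (hmu : MinUnsat F)
    (W : Finset V) (hne : (tch F W).Nonempty) (f : V → α) (hf : ∀ v, f v ∈ D v)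
    (h : ∀ C ∈ tch F W, ∃ p ∈ C.1, p.1 ∈ W ∧ f p.1 ≠ p.2) : False := by
  have hss : F \ tch F W ⊂ F := by
    refine Finset.ssubset_iff_subset_ne.mpr ⟨Finset.sdiff_subset, fun he => ?_⟩
    obtain ⟨C, hC⟩ := hne
    have : C ∈ F \ tch F W := by
      rw [he]; exact ((mem_tch _ _ _).mp hC).1
    exact (Finset.mem_sdiff.mp this).2 hC
  obtain ⟨g, hg, hg2⟩ := (sat_iff hD _).mp (hmu.2 _ hss)
  apply hmu.1
  rw [sat_iff hD]
  refine ⟨fun v => if v ∈ W then f v else g v, ?_, ?_⟩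
  · intro v
    by_cases hv : v ∈ W
    · simp [hv, hf]
    · simp [hv, hg]
  · intro C hC
    by_cases hT : C ∈ tch F W
    · obtain ⟨p, hp, hW, hpf⟩ := h C hT
      exact ⟨p, hp, by simpa [hW] using hpf⟩
    · obtain ⟨p, hp, hpg⟩ := hg2 C (Finset.mem_sdiff.mpr ⟨hC, hT⟩)
      have hW : p.1 ∉ W := fun hW => hT ((mem_tch _ _ _).mpr
        ⟨hC, p.1, hW, (mem_vars_iff _ _).mpr ⟨p.2, hp⟩⟩)
      exact ⟨p, hp, by simpa [hW] using hpg⟩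

lemma hall (T : Finset (Clause D)) (W : Finset V) (k : V → ℕ) (v0 : V)
    (h : ∀ H ⊆ T, H.card ≤ ∑ v ∈ W.filter (fun v => ∃ C ∈ H, v ∈ FinFn.vars C), k v) :
    ∃ m : Clause D → V, (∀ C ∈ T, m C ∈ W ∧ m C ∈ FinFn.vars C) ∧
      ∀ v, (T.filter (fun C => m C = v)).card ≤ k v := by
  let t : {C // C ∈ T} → Finset (Σ _ : V, ℕ) := fun C =>
    (W.filter (fun v => v ∈ FinFn.vars C.1)).sigma (fun v => Finset.range (k v))
  have hh : ∀ s : Finset {C // C ∈ T}, s.card ≤ (s.biUnion t).card := by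
    intro s
    have h1 := h (s.map (Function.Embedding.subtype _)) (by
      intro C hC
      obtain ⟨a, -, rfl⟩ := Finset.mem_map.mp hC
      exact a.2)
    rw [Finset.card_map] at h1
    refine h1.trans (le_of_eq ?_)
    have : s.biUnion t = (W.filter (fun v => ∃ C ∈ s.map (Function.Embedding.subtype _),
        v ∈ FinFn.vars C)).sigma (fun v => Finset.range (k v)) := by
      ext ⟨v, n⟩
      simp only [t, Finset.mem_biUnion, Finset.mem_sigma, Finset.mem_filter, Finset.mem_map,
        Function.Embedding.subtype_apply]
      constructor
      · rintro ⟨C, hC, ⟨hW, hv⟩, hn⟩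
        exact ⟨⟨hW, C.1, ⟨C, hC, rfl⟩, hv⟩, hn⟩
      · rintro ⟨⟨hW, _, ⟨C, hC, rfl⟩, hv⟩, hn⟩
        exact ⟨C, hC, ⟨hW, hv⟩, hn⟩
    rw [this, Finset.card_sigma]
    simp
  obtain ⟨g, hg, hg2⟩ := (Finset.all_card_le_biUnion_card_iff_exists_injective t).mp hh
  refine ⟨fun C => if hC : C ∈ T then (g ⟨C, hC⟩).1 else v0, ?_, ?_⟩
  · intro C hC
    have := hg2 ⟨C, hC⟩
    simp only [t, Finset.mem_sigma, Finset.mem_filter] at this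
    simpa [hC] using this.1
  · intro v
    have : (T.filter (fun C => (if hC : C ∈ T then (g ⟨C, hC⟩).1 else v0) = v)).card
        ≤ (Finset.range (k v)).card := by
      refine Finset.card_le_card_of_injOn
        (fun C => if hC : C ∈ T then (g ⟨C, hC⟩).2 else 0) ?_ ?_
      · intro C hC
        obtain ⟨hC, hv⟩ := Finset.mem_filter.mp hC
        have := hg2 ⟨C, hC⟩
        simp only [t, Finset.mem_sigma, Finset.mem_filter] at this
        simp only [hC, dif_pos] at hv ⊢
        rw [← hv]
        exact this.2
      · intro C hC C' hC' he
        obtain ⟨hC, hv⟩ := Finset.mem_filter.mp hC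
        obtain ⟨hC', hv'⟩ := Finset.mem_filter.mp hC'
        simp only [hC, hC', dif_pos] at hv hv' he
        have : g ⟨C, hC⟩ = g ⟨C', hC'⟩ := by
          refine Sigma.ext (hv.trans hv'.symm) (heq_of_eq he)
        exact congrArg Subtype.val (hg this)
    simpa using this

lemma avoid (A : Finset (Clause D)) (E : Finset α) (v : V)
    (h : A.card + E.card < (D v).card) :
    ∃ ε ∈ D v, ε ∉ E ∧ ∀ C ∈ A, (v, ε) ∉ C.1 := by
  by_contra hcon
  push Not at hcon
  have h1 : D v ⊆ E ∪ A.biUnion (fun C => (C.1.filter (fun p => p.1 = v)).image Prod.snd) := by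
    intro ε hε
    by_cases hE : ε ∈ E
    · simp [hE]
    · obtain ⟨C, hC, hm⟩ := hcon ε hε hE
      refine Finset.mem_union_right _ (Finset.mem_biUnion.mpr ⟨C, hC, ?_⟩)
      exact Finset.mem_image.mpr ⟨(v, ε), by simp [hm], rfl⟩
  have h2 : (A.biUnion (fun C => (C.1.filter (fun p => p.1 = v)).image Prod.snd)).card
      ≤ A.card * 1 := by
    refine Finset.card_biUnion_le_card_mul _ _ _ (fun C _ => ?_)
    refine Finset.card_image_le.trans ?_
    rw [Finset.card_le_one]
    intro a ha b hb
    obtain ⟨ha, ha'⟩ := Finset.mem_filter.mp ha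
    obtain ⟨hb, hb'⟩ := Finset.mem_filter.mp hb
    exact C.2.2 a ha b hb (ha'.trans hb'.symm)
  have h3 := (Finset.card_le_card h1).trans (Finset.card_union_le _ _)
  omega

/-- sum of `|D v| - 1` -/
def S (D : V → Finset α) (W : Finset V) : ℕ := ∑ v ∈ W, ((D v).card - 1)

lemma tch_diff (F : Finset (Clause D)) (W : Finset V) (H : Finset (Clause D)) (hH : H ⊆ tch F W) :
    (tch F (W.filter (fun v => ¬ ∃ C ∈ H, v ∈ FinFn.vars C))).card + H.card
      ≤ (tch F W).card := by
  rw [← Finset.card_union_of_disjoint]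
  · refine Finset.card_le_card (Finset.union_subset ?_ hH)
    intro C hC
    rw [mem_tch] at hC ⊢
    obtain ⟨hC, v, hv, hvC⟩ := hC
    exact ⟨hC, v, (Finset.mem_filter.mp hv).1, hvC⟩
  · rw [Finset.disjoint_left]
    intro C hC hCH
    obtain ⟨hC, v, hv, hvC⟩ := (mem_tch _ _ _).mp hC
    exact (Finset.mem_filter.mp hv).2 ⟨C, hCH, hvC⟩

lemma tch_lower (hD : ∀ v, (D v).Nonempty) (F : Finset (Clause D)) (hmu : MinUnsat F)
    (W : Finset V) (hW : W ⊆ mvars F.val) (hne : W.Nonempty) :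
    S D W < (tch F W).card := by
  induction W using Finset.strongInduction with
  | H W ih =>
  by_contra hlt
  push Not at hlt
  obtain ⟨m, hm, hmk⟩ := hall (tch F W) W (fun v => (D v).card - 1) hne.choose (by
    intro H hH
    by_contra hcon
    push Not at hcon
    have h1 := tch_diff F W H hH
    have h2 := Finset.sum_filter_add_sum_filter_not W
      (fun v => ∃ C ∈ H, v ∈ FinFn.vars C) (fun v => (D v).card - 1)
    have hHne : H.Nonempty := by
      rw [← Finset.card_pos]; omega
    set U := W.filter (fun v => ¬ ∃ C ∈ H, v ∈ FinFn.vars C) with hU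
    have hUW : U ⊂ W := by
      refine Finset.filter_ssubset.mpr ?_
      obtain ⟨C, hC⟩ := hHne
      obtain ⟨-, v, hv, hvC⟩ := (mem_tch _ _ _).mp (hH hC)
      exact ⟨v, hv, not_not.mpr ⟨C, hC, hvC⟩⟩
    unfold S at hlt
    have hUne : U.Nonempty := by
      by_contra h0
      rw [Finset.not_nonempty_iff_eq_empty] at h0
      rw [h0, Finset.sum_empty] at h2
      omega
    have h3 := ih U hUW (hUW.subset.trans hW) hUne
    unfold S at h3
    omega)
  have hch : ∀ v, ∃ ε ∈ D v, ε ∉ (∅ : Finset α) ∧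
      ∀ C ∈ (tch F W).filter (fun C => m C = v), (v, ε) ∉ C.1 := by
    intro v
    apply avoid
    have := hmk v
    have := (hD v).card_pos
    simp only [Finset.card_empty]
    omega
  choose f hf _ hf2 using hch
  obtain ⟨v, hv⟩ := hne
  obtain ⟨C, hC, hvC⟩ := (mem_mvars_iff _ _).mp (hW hv)
  refine no_autarky hD F hmu W ⟨C, (mem_tch _ _ _).mpr ⟨hC, v, hv, hvC⟩⟩ f hf ?_
  intro C hC
  obtain ⟨h1, h2⟩ := hm C hC
  obtain ⟨ε, hε⟩ := (mem_vars_iff _ _).mp h2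
  refine ⟨_, hε, h1, ?_⟩
  intro he
  apply hf2 (m C) C (Finset.mem_filter.mpr ⟨hC, rfl⟩)
  simp only at he
  rw [he]; exact hε

lemma at_most_one (hD : ∀ v, (D v).Nonempty) (F : Finset (Clause D)) (hmu : MinUnsat F)
    (W : Finset V) (hW : W ⊆ mvars F.val) (h2 : ∀ v ∈ W, 2 ≤ (D v).card)
    (hcard : (tch F W).card = S D W + 1)
    (hmin : ∀ U ⊂ W, U.Nonempty → (tch F U).card ≠ S D U + 1)
    (v : V) (hv : v ∈ W) (ε : α) (C1 C2 : Clause D) (hC1 : C1 ∈ F) (hC2 : C2 ∈ F)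
    (hl1 : (v, ε) ∈ C1.1) (hl2 : (v, ε) ∈ C2.1) : C1 = C2 := by
  by_contra hne
  have hT : ∀ C ∈ F, (v, ε) ∈ C.1 → C ∈ tch F W := fun C hC hl =>
    (mem_tch _ _ _).mpr ⟨hC, v, hv, (mem_vars_iff _ _).mpr ⟨ε, hl⟩⟩
  have hT1 := hT C1 hC1 hl1
  have hT2 := hT C2 hC2 hl2
  have hpair : ({C1, C2} : Finset (Clause D)).card = 2 := Finset.card_pair hne
  obtain ⟨m, hm, hmk⟩ := hall (tch F W \ {C1, C2}) W
      (fun w => (D w).card - 1 - (if w = v then 1 else 0)) v (by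
    intro H hH
    by_contra hcon
    push Not at hcon
    have hH' : H ⊆ tch F W := hH.trans Finset.sdiff_subset
    have h1 := tch_diff F W H hH'
    have h2' := Finset.sum_filter_add_sum_filter_not W
      (fun v => ∃ C ∈ H, v ∈ FinFn.vars C) (fun v => (D v).card - 1)
    have hHne : H.Nonempty := by
      rw [← Finset.card_pos]; omega
    have hHc : H.card + 2 ≤ (tch F W).card := by
      rw [← hpair, ← Finset.card_union_of_disjoint]
      · refine Finset.card_le_card (Finset.union_subset hH' ?_)
        intro C hC
        rcases Finset.mem_insert.mp hC with rfl | hC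
        · exact hT1
        · rw [Finset.mem_singleton.mp hC]; exact hT2
      · rw [Finset.disjoint_left]
        intro C hC
        exact (Finset.mem_sdiff.mp (hH hC)).2
    set U := W.filter (fun v => ¬ ∃ C ∈ H, v ∈ FinFn.vars C) with hU
    set X := W.filter (fun v => ∃ C ∈ H, v ∈ FinFn.vars C) with hX
    have hsum : ∑ w ∈ X, ((D w).card - 1 - (if w = v then 1 else 0)) + (if v ∈ X then 1 else 0)
        = ∑ w ∈ X, ((D w).card - 1) := by
      have : (if v ∈ X then 1 else 0) = ∑ w ∈ X, (if w = v then 1 else 0) := by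
        simp
      rw [this, ← Finset.sum_add_distrib]
      refine Finset.sum_congr rfl (fun w hw => ?_)
      have := h2 w (Finset.mem_filter.mp hw).1
      split_ifs <;> omega
    have hUW : U ⊂ W := by
      refine Finset.filter_ssubset.mpr ?_
      obtain ⟨C, hC⟩ := hHne
      obtain ⟨-, v, hv, hvC⟩ := (mem_tch _ _ _).mp (hH' hC)
      exact ⟨v, hv, not_not.mpr ⟨C, hC, hvC⟩⟩
    unfold S at hcard
    have hif : (if v ∈ X then 1 else 0) ≤ 1 := by split_ifs <;> omega
    by_cases hUne : U.Nonempty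
    · have h3 := tch_lower hD F hmu U (hUW.subset.trans hW) hUne
      have h4 := hmin U hUW hUne
      unfold S at h3 h4
      omega
    · rw [Finset.not_nonempty_iff_eq_empty] at hUne
      rw [hUne, Finset.sum_empty] at h2'
      omega)
  have hch : ∀ w, ∃ δ ∈ D w, δ ∉ (if w = v then {ε} else ∅ : Finset α) ∧
      ∀ C ∈ (tch F W \ {C1, C2}).filter (fun C => m C = w), (w, δ) ∉ C.1 := by
    intro w
    apply avoid
    have h3 := hmk w
    have h4 := (hD w).card_pos
    by_cases hw : w = v
    · have := h2 v hv
      subst hw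
      simp only [if_true, Finset.card_singleton] at h3 ⊢
      omega
    · simp only [hw, if_false, Finset.card_empty] at h3 ⊢
      omega
  choose f hf hfv hf2 using hch
  have hfε : f v ≠ ε := by simpa using hfv v
  refine no_autarky hD F hmu W ⟨C1, hT1⟩ f hf ?_
  intro C hC
  by_cases hCp : C ∈ ({C1, C2} : Finset (Clause D))
  · refine ⟨(v, ε), ?_, hv, hfε⟩
    rcases Finset.mem_insert.mp hCp with rfl | hC
    · exact hl1
    · rw [Finset.mem_singleton.mp hC]; exact hl2
  have hC' := Finset.mem_sdiff.mpr ⟨hC, hCp⟩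
  obtain ⟨h1, h2⟩ := hm C hC'
  obtain ⟨δ, hδ⟩ := (mem_vars_iff _ _).mp h2
  refine ⟨_, hδ, h1, ?_⟩
  intro he
  apply hf2 (m C) C (Finset.mem_filter.mpr ⟨hC', rfl⟩)
  simp only at he
  rw [he]; exact hδ

lemma litCount_eq (F : Finset (Clause D)) (l : V × α) :
    litCount F.val l = (F.filter (fun C => l ∈ C.1)).card := rfl

lemma at_least_one (hD : ∀ v, (D v).Nonempty) (F : Finset (Clause D)) (hmu : MinUnsat F)
    (v : V) (hv : v ∈ mvars F.val) (ε : α) (hε : ε ∈ D v) : ∃ C ∈ F, (v, ε) ∈ C.1 := by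
  by_contra hcon
  push Not at hcon
  obtain ⟨C, hC, hvC⟩ := (mem_mvars_iff _ _).mp hv
  refine no_autarky hD F hmu {v} ⟨C, (mem_tch _ _ _).mpr ⟨hC, v, by simp, hvC⟩⟩
    (fun w => if w = v then ε else (hD w).choose) ?_ ?_
  · intro w
    by_cases hw : w = v
    · subst hw; simpa using hε
    · simpa [hw] using (hD w).choose_spec
  · intro C hCT
    obtain ⟨hCF, w, hw, hwC⟩ := (mem_tch _ _ _).mp hCT
    rw [Finset.mem_singleton] at hw
    subst hw
    obtain ⟨δ, hδ⟩ := (mem_vars_iff _ _).mp hwC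
    refine ⟨_, hδ, by simp, ?_⟩
    simp only [if_true]
    rintro rfl
    exact hcon C hCF hδ

lemma singular_aux (hD : ∀ v, (D v).Nonempty) (F : Finset (Clause D)) (hmu : MinUnsat F)
    (v : V) (hv : v ∈ mvars F.val)
    (h : ∀ ε, ∀ C1 ∈ F, ∀ C2 ∈ F, (v, ε) ∈ C1.1 → (v, ε) ∈ C2.1 → C1 = C2) :
    ∀ ε ∈ D v, litCount F.val (v, ε) = 1 := by
  intro ε hε
  rw [litCount_eq]
  obtain ⟨C, hC, hl⟩ := at_least_one hD F hmu v hv ε hε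
  refine Finset.card_eq_one.mpr ⟨C, ?_⟩
  ext C'
  simp only [Finset.mem_filter, Finset.mem_singleton]
  constructor
  · rintro ⟨hC', hl'⟩
    exact h ε _ hC' _ hC hl' hl
  · rintro rfl
    exact ⟨hC, hl⟩

/-- every minimally unsatisfiable generalised clause-set of
deficiency `1` with at least one variable has a variable `v` all of whose values
occur in exactly one clause. -/
theorem exists_singular_variable_of_deficiency_one
    (hD : ∀ v, (D v).Nonempty) (F : Finset (Clause D))
    (hmu : MinUnsat F) (hδ : delta F.val = 1) (hn : (mvars F.val).Nonempty) :
    ∃ v ∈ mvars F.val, ∀ ε ∈ D v, litCount F.val (v, ε) = 1 := by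
  have hc : F.card = S D (mvars F.val) + 1 := by
    unfold delta at hδ
    have : ((S D (mvars F.val) : ℕ) : ℤ) = ∑ v ∈ mvars F.val, ((D v).card - 1 : ℤ) := by
      unfold S
      rw [Nat.cast_sum]
      refine Finset.sum_congr rfl (fun v _ => ?_)
      have := (hD v).card_pos
      rw [Nat.cast_sub this]
      simp
    rw [← this] at hδ
    have h' : Multiset.card F.val = F.card := rfl
    rw [h'] at hδ
    omega
  set N := (mvars F.val).filter (fun v => 2 ≤ (D v).card) with hN
  have hS : S D (mvars F.val) = S D N := by
    unfold S
    symm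
    refine Finset.sum_subset (Finset.filter_subset _ _) (fun v hv hv' => ?_)
    have : ¬ 2 ≤ (D v).card := fun h => hv' (Finset.mem_filter.mpr ⟨hv, h⟩)
    omega
  have hNs : N ⊆ mvars F.val := Finset.filter_subset _ _
  by_cases hNe : N.Nonempty
  · have hTN : (tch F N).card = S D N + 1 := by
      have h1 := tch_lower hD F hmu N hNs hNe
      have h2 : (tch F N).card ≤ F.card := Finset.card_le_card (Finset.filter_subset _ _)
      omega
    let P : Finset V → Prop := fun W => W ⊆ N ∧ W.Nonempty ∧ (tch F W).card = S D W + 1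
    obtain ⟨W, ⟨hWN, hWne, hWc⟩, hWmin⟩ : ∃ W, P W ∧ ∀ U, U ⊂ W → ¬ P U := by
      obtain ⟨W, hW, hmin⟩ := WellFounded.has_min (wellFounded_lt (α := Finset V)) {W | P W}
        ⟨N, Finset.Subset.refl _, hNe, hTN⟩
      exact ⟨W, hW, fun U hU hPU => hmin U hPU hU⟩
    obtain ⟨v, hv⟩ := hWne
    refine ⟨v, hNs (hWN hv), singular_aux hD F hmu v (hNs (hWN hv)) ?_⟩
    intro ε C1 h1 C2 h2 hl1 hl2
    exact at_most_one hD F hmu W (hWN.trans hNs) (fun w hw => (Finset.mem_filter.mp (hWN hw)).2)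
      hWc (fun U hU hUne he => hWmin U hU ⟨hU.subset.trans hWN, hUne, he⟩) v hv ε C1 C2 h1 h2
      hl1 hl2
  · rw [Finset.not_nonempty_iff_eq_empty] at hNe
    rw [hS, hNe] at hc
    have hc1 : F.card ≤ 1 := by simp [S] at hc; omega
    obtain ⟨v, hv⟩ := hn
    refine ⟨v, hv, singular_aux hD F hmu v hv ?_⟩
    intro ε C1 h1 C2 h2 _ _
    exact Finset.card_le_one.mp hc1 _ h1 _ h2

end GCLS
end
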